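/- With the exact-3-hitting-set construction of ρ, π_1, π_2 as described, the following are equivalent: (1) there exist natural numbers x_1, x_2 such that π_1^{x_1} π_2^{x_2} has the same cycle type as ρ; (2) there exists a subset T ⊆ [n] such that |T ∩ C_j| = 1 for all j ∈ [m]. -/

import Mathlib

/-! Exact-3-hitting-set construction.  The ground set is `Fin n`; the `j`-th clause is
`{idx j 0, idx j 1, idx j 2}` with `idx j` strictly monotone.  `p i` is the `(i+1)`-st prime
greater than `3` (zero-indexed, so `p 0 = 5`), `q n j` is the `(j+1)`-st of the `m` primes
following the first `2n` primes greater than `3`.  Every permutation group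
`Sym(ℓ)`-component is realized on `Fin ℓ`, and the `ℓ`-cycle `([ℓ]) = (1,2,…,ℓ)` is realized
as `finRotate ℓ`.  Cycle types are computed in the symmetric group on the disjoint union of
all components (fixpoints are discarded by `Equiv.Perm.cycleType`, so the padding of the
second block of components to degree `p_n^3 q_j` is immaterial). -/

namespace HittingSet

/-- `p i` is the `(i+1)`-st prime greater than 3 (zero-indexed): `p 0 = 5`. -/
noncomputable def p (i : ℕ) : ℕ := Nat.nth Nat.Prime (i + 2)

/-- `q n j` is the `(j+1)`-st prime following the first `2n` primes greater than 3. -/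
noncomputable def q (n j : ℕ) : ℕ := Nat.nth Nat.Prime (2 * n + 2 + j)

/-- `r j = q_j ⬝ p_{i_1} p_{i_2} p_{i_3}` for the clause `C_j = {i_1 < i_2 < i_3}`. -/
noncomputable def r (n : ℕ) {m : ℕ} (idx : Fin m → Fin 3 → Fin n) (j : Fin m) : ℕ :=
  q n j * (p (idx j 0) * p (idx j 1) * p (idx j 2))

/-- The underlying set of the permutation group
`G = ∏_{i=1}^n Sym(p_i p_{n+i}) × ∏_{j=1}^m Sym(r_j)^6` (embedded in a symmetric group). -/
abbrev Omega (n : ℕ) {m : ℕ} (idx : Fin m → Fin 3 → Fin n) : Type :=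
  (Σ i : Fin n, Fin (p i * p (n + i))) ⊕ (Σ j : Fin m, Σ _d : Fin 6, Fin (r n idx j))

/-- `ρ = (ζ_1,…,ζ_n,η_1,…,η_m)` with `ζ_i = ([p_i p_{n+i}])` and
`η_j = (([r_j])^{p_{i_1}p_{i_2}p_{i_3}}, ([r_j])^{p_{i_1}}, ([r_j])^{p_{i_2}},
([r_j])^{p_{i_3}}, ([r_j]), ([r_j]))`. -/
noncomputable def rho (n : ℕ) {m : ℕ} (idx : Fin m → Fin 3 → Fin n) : Equiv.Perm (Omega n idx) :=
  Equiv.sumCongr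
    (Equiv.sigmaCongrRight fun _i => finRotate _)
    (Equiv.sigmaCongrRight fun j => Equiv.sigmaCongrRight fun d =>
      finRotate (r n idx j) ^
        (![p (idx j 0) * p (idx j 1) * p (idx j 2),
           p (idx j 0), p (idx j 1), p (idx j 2), 1, 1] d))

/-- `π_1 = (α_1,…,α_n,β_1,…,β_m)` with `α_i = ([p_i p_{n+i}])` and
`β_j = (([r_j])^{s_{j,1}}, …, ([r_j])^{s_{j,6}})`. -/
noncomputable def pi1 (n : ℕ) {m : ℕ} (idx : Fin m → Fin 3 → Fin n) (s : Fin m → ℕ → ℕ) :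
    Equiv.Perm (Omega n idx) :=
  Equiv.sumCongr
    (Equiv.sigmaCongrRight fun _i => finRotate _)
    (Equiv.sigmaCongrRight fun j => Equiv.sigmaCongrRight fun d =>
      finRotate (r n idx j) ^ s j d.val)

/-- `π_2 = (γ_1,…,γ_n,δ_1,…,δ_m)` with `γ_i = id` and
`δ_j = (([r_j])^{t_j}, …, ([r_j])^{t_j})`. -/
noncomputable def pi2 (n : ℕ) {m : ℕ} (idx : Fin m → Fin 3 → Fin n) (t : Fin m → ℕ) :
    Equiv.Perm (Omega n idx) :=
  Equiv.sumCongr (Equiv.refl _)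
    (Equiv.sigmaCongrRight fun j => Equiv.sigmaCongrRight fun _d =>
      finRotate (r n idx j) ^ t j)

/-!
For squarefree `ℓ` the cycle type of `([ℓ])^k` is determined by which primes `π ∣ ℓ` divide `k`,
and all cycles of `([ℓ])^k` have length `ℓ / gcd(ℓ, k)`. In every element of `G` built from powers
of the given cycles, a cycle of length `p_i p_{n+i}` can occur only in the `i`-th component, and a
cycle of length `q_j` only in the six components of the `j`-th clause. Both lengths occur in `ρ`,
so if `ct(π_1^{x_1} π_2^{x_2}) = ct(ρ)`, then no `p_i` divides `x_1`, and in each clause some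
exponent `x_1 s_{j,d} + x_2 t_j` is divisible by all three `p_{i_b}`, that is,
`x_2 ≡ -s_{j,d} x_1`. For fixed `d` exactly one of the residues `-s_{j,d} mod p_{i_b}` is `1`
(no other one becomes `1`, as the primes exceed `3`), hence `T = {i | x_2 ≡ x_1 mod p_i}` meets
each clause exactly once.

Conversely, let `x_1 = 1` and let `x_2` be `1` or `0` modulo `p_i` according to whether `i ∈ T`.
Whichever element of the clause is hit, the sets of primes `p_{i_b}` dividing the six exponents
are, up to order, all three primes, each of the singletons, and twice the empty set, exactly as
for `ρ`.
-/

section CycleType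

open Equiv Equiv.Perm

variable {α β : Type*}

theorem viaEmbedding_inl (f : Perm α) :
    f.viaEmbedding Function.Embedding.inl = Perm.sumCongr f (1 : Perm β) := by
  ext (a | b)
  · exact viaEmbedding_apply f Function.Embedding.inl a
  · exact viaEmbedding_apply_of_notMem f _ _ (by simp)

theorem viaEmbedding_inr (g : Perm β) :
    g.viaEmbedding Function.Embedding.inr = Perm.sumCongr (1 : Perm α) g := by
  ext (a | b)
  · exact viaEmbedding_apply_of_notMem g _ _ (by simp)
  · exact viaEmbedding_apply g Function.Embedding.inr b

variable [Fintype α] [DecidableEq α] [Fintype β] [DecidableEq β]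

theorem cycleType_viaEmbedding (f : Perm α) (ι : α ↪ β) :
    (f.viaEmbedding ι).cycleType = f.cycleType := by
  rw [viaEmbedding]
  convert cycleType_extendDomain (ofInjective ι.1 ι.2)

theorem cycleType_sumCongr (f : Perm α) (g : Perm β) :
    (Perm.sumCongr f g).cycleType = f.cycleType + g.cycleType := by
  have hfg : Perm.sumCongr f g = Perm.sumCongr f 1 * Perm.sumCongr 1 g := by
    rw [Perm.sumCongr_mul, mul_one, one_mul]
  have hdisj : Perm.Disjoint (Perm.sumCongr f (1 : Perm β)) (Perm.sumCongr (1 : Perm α) g) := by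
    rintro (a | b) <;> simp
  rw [hfg, hdisj.cycleType_mul, ← viaEmbedding_inl, ← viaEmbedding_inr, cycleType_viaEmbedding,
    cycleType_viaEmbedding]

variable {ι : Type*} [DecidableEq ι] {γ : ι → Type*}

theorem viaEmbedding_sigmaMk (i : ι) (f : Perm (γ i)) :
    f.viaEmbedding (Function.Embedding.sigmaMk i) = Perm.sigmaCongrRight (Pi.mulSingle i f) := by
  ext1 ⟨k, x⟩
  obtain rfl | hk := eq_or_ne k i
  · simpa using viaEmbedding_apply f (Function.Embedding.sigmaMk k) x
  · rw [viaEmbedding_apply_of_notMem f _ _ (by simp [hk.symm])]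
    simp [hk]

variable [Fintype ι] [∀ i, Fintype (γ i)] [∀ i, DecidableEq (γ i)]

theorem cycleType_sigmaCongrRight (F : ∀ i, Perm (γ i)) :
    (Perm.sigmaCongrRight F).cycleType = ∑ i, (F i).cycleType := by
  have hdisj : Pairwise fun i j => Perm.Disjoint (Perm.sigmaCongrRight (Pi.mulSingle i (F i)))
      (Perm.sigmaCongrRight (Pi.mulSingle j (F j))) := by
    rintro i j hij ⟨k, x⟩
    obtain rfl | hk := eq_or_ne k i
    · simp [hij]
    · simp [hk]
  have hprod : Perm.sigmaCongrRight F = Finset.univ.noncommProd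
      (fun i => Perm.sigmaCongrRight (Pi.mulSingle i (F i)))
      fun i _ j _ hij => (hdisj hij).commute := by
    conv_lhs => rw [← Finset.noncommProd_mulSingle F]
    exact Finset.map_noncommProd _ _ _ (sigmaCongrRightHom γ)
  rw [hprod, Disjoint.cycleType_noncommProd (fun i _ j _ hij => hdisj hij)]
  exact Finset.sum_congr rfl fun i _ => by rw [← viaEmbedding_sigmaMk, cycleType_viaEmbedding]

variable {σ : Perm α} {k k' L : ℕ}

theorem eq_orderOf_of_mem_cycleType_pow (hσ : σ.IsCycle) (hL : L ∈ (σ ^ k).cycleType) :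
    L = orderOf (σ ^ k) := by
  refine Nat.dvd_antisymm (dvd_of_mem_cycleType hL) ?_
  obtain ⟨c, τ, hcτ, hdisj, hc, rfl⟩ := mem_cycleType_iff.mp hL
  obtain ⟨x, hx, -⟩ := id hc
  have hτx : τ x = x := (hdisj x).resolve_left hx
  have hσx : σ x ≠ x := fun h => hx <| by
    simpa only [hcτ, Perm.mul_apply, hτx] using pow_apply_eq_self_of_apply_eq_self h k
  have hfix : (σ ^ (k * c.support.card)) x = x := by
    rw [pow_mul, hcτ, hdisj.commute.mul_pow, ← hc.orderOf, pow_orderOf_eq_one, one_mul,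
      pow_apply_eq_self_of_apply_eq_self hτx]
  rw [orderOf_dvd_iff_pow_eq_one, ← pow_mul, hσ.pow_eq_one_iff' hσx, hfix]

theorem cycleType_pow_of_isCycle (hσ : σ.IsCycle) (hk : ¬ orderOf σ ∣ k) :
    (σ ^ k).cycleType =
      Multiset.replicate ((orderOf σ).gcd k) (orderOf σ / (orderOf σ).gcd k) := by
  have hrep : (σ ^ k).cycleType = Multiset.replicate (σ ^ k).cycleType.card (orderOf (σ ^ k)) :=
    Multiset.eq_replicate_card.mpr fun L => eq_orderOf_of_mem_cycleType_pow hσ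
  have hsum : (σ ^ k).cycleType.card * orderOf (σ ^ k) = orderOf σ := by
    rw [hσ.orderOf, ← hσ.support_pow_eq_iff.mpr hk, ← sum_cycleType, hrep, Multiset.sum_replicate,
      Multiset.card_replicate, smul_eq_mul]
  have hcard : (σ ^ k).cycleType.card = (orderOf σ).gcd k := by
    refine Nat.eq_of_mul_eq_mul_right (orderOf_pos (σ ^ k)) ?_
    rw [hsum, orderOf_pow, Nat.mul_div_cancel' (Nat.gcd_dvd_left _ _)]
  rw [hrep, hcard, orderOf_pow]

theorem cycleType_pow_eq_of_gcd_eq (hσ : σ.IsCycle)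
    (h : (orderOf σ).gcd k = (orderOf σ).gcd k') :
    (σ ^ k).cycleType = (σ ^ k').cycleType := by
  have hdvd : orderOf σ ∣ k ↔ orderOf σ ∣ k' := by
    rw [← Nat.gcd_eq_left_iff_dvd, ← Nat.gcd_eq_left_iff_dvd, h]
  by_cases hk : orderOf σ ∣ k
  · rw [orderOf_dvd_iff_pow_eq_one.mp hk, orderOf_dvd_iff_pow_eq_one.mp (hdvd.mp hk)]
  · rw [cycleType_pow_of_isCycle hσ hk, cycleType_pow_of_isCycle hσ (mt hdvd.mpr hk), h]

theorem mem_cycleType_pow_iff (hσ : σ.IsCycle) :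
    L ∈ (σ ^ k).cycleType ↔ 1 < L ∧ L * (orderOf σ).gcd k = orderOf σ := by
  have hgcd : 0 < (orderOf σ).gcd k := Nat.gcd_pos_of_pos_left _ (orderOf_pos σ)
  constructor
  · intro hL
    refine ⟨one_lt_of_mem_cycleType hL, ?_⟩
    rw [eq_orderOf_of_mem_cycleType_pow hσ hL, orderOf_pow,
      Nat.div_mul_cancel (Nat.gcd_dvd_left _ _)]
  · rintro ⟨hL, hmul⟩
    have hk : ¬ orderOf σ ∣ k := fun hk => hL.ne' <| by
      rwa [Nat.gcd_eq_left hk, Nat.mul_eq_right (orderOf_pos σ).ne'] at hmul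
    rw [cycleType_pow_of_isCycle hσ hk, Multiset.mem_replicate]
    exact ⟨hgcd.ne', (Nat.div_eq_of_eq_mul_left hgcd hmul.symm).symm⟩

theorem orderOf_finRotate {l : ℕ} (hl : 2 ≤ l) : orderOf (finRotate l) = l := by
  rw [(isCycle_finRotate_of_le hl).orderOf, support_finRotate_of_le hl, Finset.card_fin]

theorem mem_cycleType_finRotate_pow_iff {l : ℕ} (hl : 2 ≤ l) :
    L ∈ (finRotate l ^ k).cycleType ↔ 1 < L ∧ L * l.gcd k = l := by
  rw [mem_cycleType_pow_iff (isCycle_finRotate_of_le hl), orderOf_finRotate hl]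

theorem gcd_eq_gcd_of_squarefree {l : ℕ} (hl : Squarefree l)
    (h : ∀ π, π.Prime → π ∣ l → (π ∣ k ↔ π ∣ k')) : l.gcd k = l.gcd k' := by
  have hsq (i : ℕ) : Squarefree (l.gcd i) := hl.squarefree_of_dvd (Nat.gcd_dvd_left l i)
  refine (Nat.Squarefree.ext_iff (hsq k) (hsq k')).mpr fun π hπ => ?_
  rw [Nat.dvd_gcd_iff, Nat.dvd_gcd_iff]
  exact and_congr_right (h π hπ)

theorem cycleType_finRotate_pow_eq_of_squarefree {l : ℕ} (hl : 2 ≤ l) (hsq : Squarefree l)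
    (h : ∀ π, π.Prime → π ∣ l → (π ∣ k ↔ π ∣ k')) :
    (finRotate l ^ k).cycleType = (finRotate l ^ k').cycleType := by
  refine cycleType_pow_eq_of_gcd_eq (isCycle_finRotate_of_le hl) ?_
  rw [orderOf_finRotate hl, gcd_eq_gcd_of_squarefree hsq h]

end CycleType

theorem card_inter_image_eq_one_iff {ι α : Type*} [Fintype ι] [DecidableEq α] {f : ι → α}
    (hf : Function.Injective f) (T : Finset α) :
    (T ∩ Finset.univ.image f).card = 1 ↔ ∃ a, ∀ b, f b ∈ T ↔ b = a := by
  have himage : T ∩ Finset.univ.image f = (Finset.univ.filter (f · ∈ T)).image f := by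
    rw [Finset.inter_comm, ← Finset.filter_mem_eq_inter, Finset.filter_image]
  rw [himage, Finset.card_image_of_injective _ hf, Finset.card_eq_one]
  simp only [Finset.ext_iff, Finset.mem_filter, Finset.mem_univ, true_and, Finset.mem_singleton]

theorem card_inter_triple_eq_one_iff {α : Type*} [DecidableEq α] {f : Fin 3 → α}
    (hf : Function.Injective f) (T : Finset α) :
    (T ∩ {f 0, f 1, f 2}).card = 1 ↔ ∃ a, ∀ b, f b ∈ T ↔ b = a := by
  have htriple : Finset.univ.image f = {f 0, f 1, f 2} :=
    Finset.ext fun x => by simp [Fin.exists_fin_succ, eq_comm]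
  rw [← htriple, card_inter_image_eq_one_iff hf]

section Primes

theorem p_prime (i : ℕ) : (p i).Prime := Nat.prime_nth_prime _

theorem q_prime (n j : ℕ) : (q n j).Prime := Nat.prime_nth_prime _

theorem three_lt_p (i : ℕ) : 3 < p i := by
  rw [← Nat.nth_prime_one_eq_three]
  exact Nat.nth_strictMono Nat.infinite_setOfPred_prime (by omega)

theorem nth_prime_dvd_nth_prime_iff {a b : ℕ} :
    Nat.nth Nat.Prime a ∣ Nat.nth Nat.Prime b ↔ a = b := by
  rw [Nat.prime_dvd_prime_iff_eq (Nat.prime_nth_prime a) (Nat.prime_nth_prime b)]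
  exact (Nat.nth_injective Nat.infinite_setOfPred_prime).eq_iff

theorem p_dvd_p_iff {a b : ℕ} : p a ∣ p b ↔ a = b := by
  rw [p, p, nth_prime_dvd_nth_prime_iff, Nat.add_right_cancel_iff]

theorem q_dvd_q_iff {n a b : ℕ} : q n a ∣ q n b ↔ a = b := by
  rw [q, q, nth_prime_dvd_nth_prime_iff, Nat.add_left_cancel_iff]

theorem not_q_dvd_p {n a b : ℕ} (hb : b < 2 * n) : ¬ q n a ∣ p b := by
  rw [q, p, nth_prime_dvd_nth_prime_iff]
  omega

theorem not_p_dvd_q {n a b : ℕ} (hb : b < 2 * n) : ¬ p b ∣ q n a := by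
  rw [q, p, nth_prime_dvd_nth_prime_iff]
  omega

theorem coprime_p {a b : ℕ} (hab : a ≠ b) : (p a).Coprime (p b) :=
  (p_prime a).coprime_iff_not_dvd.mpr (mt p_dvd_p_iff.mp hab)

theorem two_le_p_mul_p (a b : ℕ) : 2 ≤ p a * p b :=
  (p_prime a).two_le.trans (Nat.le_mul_of_pos_right _ (p_prime b).pos)

variable {n m : ℕ} {idx : Fin m → Fin 3 → Fin n} {j : Fin m}

theorem not_q_dvd_p_idx (a : ℕ) (i : Fin n) : ¬ q n a ∣ p i :=
  not_q_dvd_p (by omega)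

theorem not_q_dvd_prod_p (S : Finset (Fin 3)) : ¬ q n j ∣ ∏ b ∈ S, p (idx j b) := by
  rw [(q_prime n j).prime.dvd_finsetProd_iff]
  rintro ⟨b, -, hb⟩
  exact not_q_dvd_p_idx _ _ hb

theorem p_dvd_prod_p_iff (hidx : Function.Injective (idx j)) (S : Finset (Fin 3)) (b : Fin 3) :
    p (idx j b) ∣ ∏ c ∈ S, p (idx j c) ↔ b ∈ S := by
  simp only [(p_prime _).prime.dvd_finsetProd_iff, p_dvd_p_iff, Fin.val_inj, hidx.eq_iff,
    exists_eq_right']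

theorem r_eq_mul_prod : r n idx j = q n j * ∏ b, p (idx j b) := by
  rw [r, Fin.prod_univ_three]

theorem two_le_r : 2 ≤ r n idx j := by
  rw [r_eq_mul_prod]
  exact (q_prime n j).two_le.trans
    (Nat.le_mul_of_pos_right _ (Finset.prod_pos fun b _ => (p_prime _).pos))

theorem prime_dvd_r_iff {π : ℕ} (hπ : π.Prime) :
    π ∣ r n idx j ↔ π ∣ q n j ∨ ∃ b, π ∣ p (idx j b) := by
  simp only [r_eq_mul_prod, hπ.dvd_mul, hπ.prime.dvd_finsetProd_iff, Finset.mem_univ, true_and]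

theorem squarefree_r (hidx : Function.Injective (idx j)) : Squarefree (r n idx j) := by
  rw [r_eq_mul_prod, Nat.squarefree_mul
    ((q_prime n j).coprime_iff_not_dvd.mpr (not_q_dvd_prod_p Finset.univ))]
  refine ⟨(q_prime n j).prime.squarefree,
    Finset.squarefree_prod_of_pairwise_isCoprime (fun a _ b _ hab => ?_)
      fun b _ => (p_prime _).prime.squarefree⟩
  exact Nat.coprime_iff_isRelPrime.mp (coprime_p (Fin.val_ne_of_ne (hidx.ne hab)))

theorem cycleType_finRotate_r_pow (hidx : Function.Injective (idx j)) {k : ℕ}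
    {S : Finset (Fin 3)} (hq : ¬ q n j ∣ k) (hp : ∀ b, p (idx j b) ∣ k ↔ b ∈ S) :
    (finRotate (r n idx j) ^ k).cycleType =
      (finRotate (r n idx j) ^ ∏ b ∈ S, p (idx j b)).cycleType := by
  refine cycleType_finRotate_pow_eq_of_squarefree two_le_r (squarefree_r hidx) fun π hπ hdvd => ?_
  rcases (prime_dvd_r_iff hπ).mp hdvd with hπq | ⟨b, hπp⟩
  · rw [(Nat.prime_dvd_prime_iff_eq hπ (q_prime n j)).mp hπq]
    exact iff_of_false hq (not_q_dvd_prod_p S)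
  · rw [(Nat.prime_dvd_prime_iff_eq hπ (p_prime _)).mp hπp, hp, p_dvd_prod_p_iff hidx]

end Primes

section BlockPow

open Equiv

/-- The element of `G` with components `([p_i p_{n+i}])^u` and `([r_j])^{v j d}`; both `ρ` and
every `π_1^{x_1} π_2^{x_2}` have this form. -/
noncomputable def blockPow {n m : ℕ} (idx : Fin m → Fin 3 → Fin n) (u : ℕ)
    (v : Fin m → Fin 6 → ℕ) : Perm (Omega n idx) :=
  sumCongr
    (sigmaCongrRight fun i => finRotate (p i * p (n + i)) ^ u)
    (sigmaCongrRight fun j => sigmaCongrRight fun d => finRotate (r n idx j) ^ v j d)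

/-- The exponent of `([r_j])` in the `d`-th component of `η_j` is the product of the primes
`p_{i_b}` over the positions `b ∈ rhoPositions d` of the clause. -/
def rhoPositions : Fin 6 → Finset (Fin 3) :=
  ![Finset.univ, {0}, {1}, {2}, ∅, ∅]

variable {n m : ℕ} {idx : Fin m → Fin 3 → Fin n} {u : ℕ} {v : Fin m → Fin 6 → ℕ}

theorem blockPow_mul_blockPow (u' : ℕ) (v' : Fin m → Fin 6 → ℕ) :
    blockPow idx u v * blockPow idx u' v' = blockPow idx (u + u') (v + v') := by
  ext (⟨i, x⟩ | ⟨j, d, x⟩) <;> simp [blockPow, pow_add]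

theorem blockPow_zero : blockPow idx 0 0 = 1 := by
  ext (⟨i, x⟩ | ⟨j, d, x⟩) <;> simp [blockPow]

theorem blockPow_pow (N : ℕ) : blockPow idx u v ^ N = blockPow idx (N * u) (N • v) := by
  induction N with
  | zero => rw [pow_zero, zero_mul, zero_nsmul, blockPow_zero]
  | succ N ih => rw [pow_succ, ih, blockPow_mul_blockPow, add_one_mul, succ_nsmul]

theorem pi1_pow_mul_pi2_pow (s : Fin m → ℕ → ℕ) (t : Fin m → ℕ) (x₁ x₂ : ℕ) :
    pi1 n idx s ^ x₁ * pi2 n idx t ^ x₂ =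
      blockPow idx x₁ fun j d => x₁ * s j d + x₂ * t j := by
  have h₁ : pi1 n idx s = blockPow idx 1 fun j d => s j d := by simp only [pi1, blockPow, pow_one]
  have h₂ : pi2 n idx t = blockPow idx 0 fun j _ => t j := by
    simp only [pi2, blockPow, pow_zero]
    rfl
  rw [h₁, h₂, blockPow_pow, blockPow_pow, blockPow_mul_blockPow, mul_one, mul_zero, add_zero]
  rfl

theorem rho_eq_blockPow :
    rho n idx = blockPow idx 1 fun j d => ∏ b ∈ rhoPositions d, p (idx j b) := by
  simp only [rho, blockPow, pow_one]
  congr! 6 with j d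
  fin_cases d <;> simp [rhoPositions, Fin.prod_univ_three]

theorem cycleType_blockPow :
    (blockPow idx u v).cycleType =
      ∑ i : Fin n, (finRotate (p i * p (n + i)) ^ u).cycleType +
        ∑ j, ∑ d, (finRotate (r n idx j) ^ v j d).cycleType := by
  rw [blockPow, cycleType_sumCongr, cycleType_sigmaCongrRight, cycleType_sigmaCongrRight]
  congr! 2 with j
  exact cycleType_sigmaCongrRight _

theorem mem_cycleType_blockPow_iff {L : ℕ} :
    L ∈ (blockPow idx u v).cycleType ↔ 1 < L ∧
      ((∃ i : Fin n, L * (p i * p (n + i)).gcd u = p i * p (n + i)) ∨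
        ∃ j d, L * (r n idx j).gcd (v j d) = r n idx j) := by
  simp only [cycleType_blockPow, Multiset.mem_add, Multiset.mem_sum, Finset.mem_univ, true_and,
    mem_cycleType_finRotate_pow_iff (two_le_p_mul_p _ _), mem_cycleType_finRotate_pow_iff two_le_r,
    exists_and_left, ← and_or_left]

theorem p_mul_p_mem_cycleType_rho (i : Fin n) : p i * p (n + i) ∈ (rho n idx).cycleType := by
  rw [rho_eq_blockPow, mem_cycleType_blockPow_iff]
  exact ⟨two_le_p_mul_p _ _, .inl ⟨i, by rw [Nat.gcd_one_right, mul_one]⟩⟩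

theorem q_mem_cycleType_rho (j : Fin m) : q n j ∈ (rho n idx).cycleType := by
  rw [rho_eq_blockPow, mem_cycleType_blockPow_iff]
  refine ⟨(q_prime n j).one_lt, .inr ⟨j, 0, ?_⟩⟩
  have hgcd : (r n idx j).gcd (∏ b, p (idx j b)) = ∏ b, p (idx j b) :=
    Nat.gcd_eq_right (r_eq_mul_prod ▸ dvd_mul_left _ _)
  exact (congrArg (q n j * ·) hgcd).trans r_eq_mul_prod.symm

-- The prime `p_{n+i}` divides the degree of no component other than the `i`-th.
theorem coprime_of_p_mul_p_mem_cycleType {i : Fin n}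
    (h : p i * p (n + i) ∈ (blockPow idx u v).cycleType) : (p i * p (n + i)).Coprime u := by
  rcases (mem_cycleType_blockPow_iff.mp h).2 with ⟨k, hk⟩ | ⟨j, d, hd⟩
  · have hdvd : p (n + i) ∣ p k * p (n + k) := hk ▸ (dvd_mul_left _ _).mul_right _
    obtain rfl : i = k := by
      rw [(p_prime _).dvd_mul, p_dvd_p_iff, p_dvd_p_iff] at hdvd
      omega
    exact (Nat.mul_eq_left (zero_lt_two.trans_le (two_le_p_mul_p _ _)).ne').mp hk
  · have hdvd : p (n + i) ∣ r n idx j := hd ▸ (dvd_mul_left _ _).mul_right _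
    rcases (prime_dvd_r_iff (p_prime _)).mp hdvd with hq | ⟨b, hb⟩
    · exact absurd hq (not_p_dvd_q (by omega))
    · rw [p_dvd_p_iff] at hb
      omega

-- The prime `q_j` divides the degrees of the six components of the `j`-th clause only.
theorem exists_prod_dvd_of_q_mem_cycleType {j : Fin m}
    (h : q n j ∈ (blockPow idx u v).cycleType) : ∃ d, ∏ b, p (idx j b) ∣ v j d := by
  rcases (mem_cycleType_blockPow_iff.mp h).2 with ⟨i, hi⟩ | ⟨k, d, hd⟩
  · have hdvd : q n j ∣ p i * p (n + i) := hi ▸ dvd_mul_right _ _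
    rcases (q_prime n j).dvd_mul.mp hdvd with hq | hq
    · exact absurd hq (not_q_dvd_p (by omega))
    · exact absurd hq (not_q_dvd_p (by omega))
  · have hdvd : q n j ∣ r n idx k := hd ▸ dvd_mul_right _ _
    obtain rfl : j = k := by
      rcases (prime_dvd_r_iff (q_prime n j)).mp hdvd with hq | ⟨b, hb⟩
      · exact Fin.ext (q_dvd_q_iff.mp hq)
      · exact absurd hb (not_q_dvd_p_idx _ _)
    have hgcd : (r n idx j).gcd (v j d) = ∏ b, p (idx j b) :=
      Nat.eq_of_mul_eq_mul_left (q_prime n j).pos (hd.trans r_eq_mul_prod)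
    exact ⟨d, hgcd ▸ Nat.gcd_dvd_right _ _⟩

theorem cycleType_blockPow_one_eq_rho (hidx : ∀ j, Function.Injective (idx j))
    (hq : ∀ (j : Fin m) d, ¬ q n j ∣ v j d) {S : Fin m → Fin 6 → Finset (Fin 3)}
    (hS : ∀ j, Finset.univ.val.map (S j) = Finset.univ.val.map rhoPositions)
    (hp : ∀ j d b, p (idx j b) ∣ v j d ↔ b ∈ S j d) :
    (blockPow idx 1 v).cycleType = (rho n idx).cycleType := by
  rw [rho_eq_blockPow, cycleType_blockPow, cycleType_blockPow]
  congr! 2 with j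
  let clauseCycleType (A : Finset (Fin 3)) : Multiset ℕ :=
    (finRotate (r n idx j) ^ ∏ b ∈ A, p (idx j b)).cycleType
  calc ∑ d, (finRotate (r n idx j) ^ v j d).cycleType
      = ∑ d, clauseCycleType (S j d) := Finset.sum_congr rfl fun d _ =>
        cycleType_finRotate_r_pow (hidx j) (hq j d) (hp j d)
    _ = ((Finset.univ.val.map (S j)).map clauseCycleType).sum := by
        rw [Multiset.map_map]; rfl
    _ = ∑ d, clauseCycleType (rhoPositions d) := by
        rw [hS, Multiset.map_map]; rfl

end BlockPow

section Residues

/-- The table of the residues `-s_{j,d}` modulo `p_{i_b}`, with rows indexed by `d` and columns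
by `b`. -/
def negResidue : Fin 6 → Fin 3 → ℕ :=
  ![![1, 0, 0], ![0, 1, 0], ![0, 0, 1], ![1, 2, 3], ![3, 1, 2], ![2, 3, 1]]

/-- The positions `b` for which `p_{i_b}` divides the exponent `s_{j,d} + x t_j`, when
`x ≡ 1 mod p_{i_a}` and `x ≡ 0` modulo the two other primes of the clause. -/
def cancelledPositions (a : Fin 3) (d : Fin 6) : Finset (Fin 3) :=
  {b | negResidue d b = if b = a then 1 else 0}

theorem map_cancelledPositions (a : Fin 3) :
    Finset.univ.val.map (cancelledPositions a) = Finset.univ.val.map rhoPositions := by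
  decide +revert

theorem exists_negResidue_eq_one_iff (d : Fin 6) : ∃ a, ∀ b, negResidue d b = 1 ↔ b = a := by
  decide +revert

theorem negResidue_le_three (d : Fin 6) (b : Fin 3) : negResidue d b ≤ 3 := by
  decide +revert

theorem dvd_add_negResidue {f : ℕ → ℕ} {P : Fin 3 → ℕ}
    (h₁ : ∀ a b : Fin 3, (f a.val + if a = b then 1 else 0) % P b = 0)
    (h₂ : ∀ c b : Fin 3, (f (3 + c.val) + (1 + (3 + b.val - c.val) % 3)) % P b = 0)
    (d : Fin 6) (b : Fin 3) : P b ∣ f d + negResidue d b := by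
  have table₁ : ∀ a b : Fin 3, negResidue (Fin.castAdd 3 a) b = if a = b then 1 else 0 := by decide
  have table₂ : ∀ c b : Fin 3, negResidue (Fin.natAdd 3 c) b = 1 + (3 + b.val - c.val) % 3 := by
    decide
  refine Nat.dvd_of_mod_eq_zero ?_
  induction d using Fin.addCases (m := 3) (n := 3) with
  | left a => simpa only [table₁, Fin.val_castAdd] using h₁ a b
  | right c => simpa only [table₂, Fin.val_natAdd] using h₂ c b

theorem dvd_mul_add_mul_iff {P s t e x₁ x₂ : ℕ} (hs : P ∣ s + e) (ht : t % P = 1) :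
    P ∣ x₁ * s + x₂ * t ↔ (x₂ : ZMod P) = e * x₁ := by
  have hs' : (s : ZMod P) = -e := by
    rw [← ZMod.natCast_eq_zero_iff, Nat.cast_add] at hs
    exact eq_neg_of_add_eq_zero_left hs
  have ht' : (t : ZMod P) = 1 := by rw [← ZMod.natCast_mod, ht, Nat.cast_one]
  rw [← ZMod.natCast_eq_zero_iff, Nat.cast_add, Nat.cast_mul, Nat.cast_mul, hs', ht', mul_one,
    mul_neg, neg_add_eq_zero, mul_comm, eq_comm]

theorem natCast_zmod_inj_of_lt {P a b : ℕ} (ha : a < P) (hb : b < P) :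
    (a : ZMod P) = b ↔ a = b := by
  rw [ZMod.natCast_eq_natCast_iff', Nat.mod_eq_of_lt ha, Nat.mod_eq_of_lt hb]

theorem exists_modEq_p {n : ℕ} (c : Fin n → ℕ) : ∃ x, ∀ i : Fin n, x ≡ c i [MOD p i] := by
  obtain ⟨x, hx⟩ := Nat.chineseRemainderOfFinset c (fun i : Fin n => p i) Finset.univ
    (fun i _ => (p_prime i).ne_zero) fun i _ k _ hik => coprime_p (Fin.val_ne_of_ne hik)
  exact ⟨x, fun i => hx i (Finset.mem_univ i)⟩

theorem eq_iff_negResidue_eq_one {i x₁ x₂ : ℕ} {d : Fin 6} {b : Fin 3} (hx₁ : ¬ p i ∣ x₁)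
    (h : (x₂ : ZMod (p i)) = negResidue d b * x₁) :
    (x₂ : ZMod (p i)) = x₁ ↔ negResidue d b = 1 := by
  have : Fact (p i).Prime := ⟨p_prime i⟩
  have hx₁' : (x₁ : ZMod (p i)) ≠ 0 := by rwa [Ne, ZMod.natCast_eq_zero_iff]
  have hle := negResidue_le_three d b
  have hlt := three_lt_p i
  rw [h, mul_eq_right₀ hx₁', ← Nat.cast_one, natCast_zmod_inj_of_lt (by omega) (by omega)]

end Residues

section HittingSets

variable {n m : ℕ} {idx : Fin m → Fin 3 → Fin n} {s : Fin m → Fin 6 → ℕ} {t : Fin m → ℕ}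

theorem exists_forall_cast_eq_iff_of_cycleType_eq {x₁ x₂ : ℕ}
    (hs : ∀ j d b, p (idx j b) ∣ s j d + negResidue d b) (htp : ∀ j b, t j % p (idx j b) = 1)
    (h : (blockPow idx x₁ fun j d => x₁ * s j d + x₂ * t j).cycleType = (rho n idx).cycleType)
    (j : Fin m) : ∃ a, ∀ b, (x₂ : ZMod (p (idx j b))) = x₁ ↔ b = a := by
  obtain ⟨d, hd⟩ := exists_prod_dvd_of_q_mem_cycleType (h ▸ q_mem_cycleType_rho j)
  obtain ⟨a, ha⟩ := exists_negResidue_eq_one_iff d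
  refine ⟨a, fun b => ?_⟩
  have hx₁ : ¬ p (idx j b) ∣ x₁ := (p_prime _).coprime_iff_not_dvd.mp
    (coprime_of_p_mul_p_mem_cycleType (h ▸ p_mul_p_mem_cycleType_rho _)).coprime_mul_right
  have hx₂ : (x₂ : ZMod (p (idx j b))) = negResidue d b * x₁ :=
    (dvd_mul_add_mul_iff (hs j d b) (htp j b)).mp
      ((Finset.dvd_prod_of_mem _ (Finset.mem_univ b)).trans hd)
  rw [eq_iff_negResidue_eq_one hx₁ hx₂, ha]

theorem exists_cycleType_eq_of_forall_mem_iff (hidx : ∀ j, Function.Injective (idx j))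
    (hsq : ∀ (j : Fin m) d, s j d % q n j = 1)
    (hs : ∀ j d b, p (idx j b) ∣ s j d + negResidue d b) (htp : ∀ j b, t j % p (idx j b) = 1)
    (htq : ∀ j : Fin m, t j % q n j = 0) {T : Finset (Fin n)}
    (hT : ∀ j, ∃ a, ∀ b, idx j b ∈ T ↔ b = a) :
    ∃ x, (blockPow idx 1 fun j d => 1 * s j d + x * t j).cycleType = (rho n idx).cycleType := by
  choose a ha using hT
  obtain ⟨x, hx⟩ := exists_modEq_p fun i => if i ∈ T then 1 else 0
  refine ⟨x, cycleType_blockPow_one_eq_rho hidx (fun j d hdvd => ?_)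
    (fun j => map_cancelledPositions (a j)) fun j d b => ?_⟩
  · have hqs : q n j ∣ s j d := by
      rwa [one_mul, Nat.dvd_add_left ((Nat.dvd_of_mod_eq_zero (htq j)).mul_left x)] at hdvd
    exact absurd (hsq j d) (by rw [Nat.mod_eq_zero_of_dvd hqs]; exact zero_ne_one)
  · have hlt : (if b = a j then 1 else 0) < p (idx j b) := by
      have := three_lt_p (idx j b)
      split_ifs <;> omega
    have hlt' := (negResidue_le_three d b).trans_lt (three_lt_p (idx j b))
    have hxb : (x : ZMod (p (idx j b))) = (if b = a j then 1 else 0 : ℕ) := by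
      simpa only [ha] using (ZMod.natCast_eq_natCast_iff _ _ _).mpr (hx (idx j b))
    rw [dvd_mul_add_mul_iff (hs j d b) (htp j b), Nat.cast_one, mul_one, hxb,
      natCast_zmod_inj_of_lt hlt hlt', eq_comm, cancelledPositions, Finset.mem_filter_univ]

theorem cycleType_eq_iff_exactHittingSet_general (hidx : ∀ j, Function.Injective (idx j))
    {s : Fin m → ℕ → ℕ}
    (hsq : ∀ j : Fin m, ∀ d : ℕ, d < 6 → s j d % q n j = 1)
    (hs1 : ∀ j : Fin m, ∀ a b : Fin 3,
      (s j a.val + if a = b then 1 else 0) % p (idx j b) = 0)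
    (hs2 : ∀ j : Fin m, ∀ c b : Fin 3,
      (s j (3 + c.val) + (1 + (3 + b.val - c.val) % 3)) % p (idx j b) = 0)
    (htp : ∀ j : Fin m, ∀ a : Fin 3, t j % p (idx j a) = 1)
    (htq : ∀ j : Fin m, t j % q n j = 0) :
    (∃ x1 x2 : ℕ,
        (pi1 n idx s ^ x1 * pi2 n idx t ^ x2).cycleType = (rho n idx).cycleType) ↔
      ∃ T : Finset (Fin n),
        ∀ j : Fin m, (T ∩ {idx j 0, idx j 1, idx j 2}).card = 1 := by
  have hs (j : Fin m) (d : Fin 6) (b : Fin 3) : p (idx j b) ∣ s j d + negResidue d b :=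
    dvd_add_negResidue (P := fun b => p (idx j b)) (hs1 j) (hs2 j) d b
  simp only [card_inter_triple_eq_one_iff (hidx _), pi1_pow_mul_pi2_pow]
  constructor
  · rintro ⟨x₁, x₂, h⟩
    exact ⟨Finset.univ.filter fun i : Fin n => (x₂ : ZMod (p i)) = x₁, fun j => by
      simpa only [Finset.mem_filter_univ] using
        exists_forall_cast_eq_iff_of_cycleType_eq hs htp h j⟩
  · rintro ⟨T, hT⟩
    exact ⟨1, exists_cycleType_eq_of_forall_mem_iff hidx (fun j d => hsq j d d.2) hs htp htq hT⟩

end HittingSets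

/-- There are `x_1, x_2` with `ct(π_1^{x_1} π_2^{x_2}) = ct(ρ)` if and only if there is a
subset `T ⊆ [n]` hitting every clause `C_j` in exactly one element. -/
theorem cycleType_eq_iff_exactHittingSet
    (n m : ℕ) (idx : Fin m → Fin 3 → Fin n) (hidx : ∀ j, StrictMono (idx j))
    (s : Fin m → ℕ → ℕ) (t : Fin m → ℕ)
    -- `s j d ∈ [0, r_j - 1]` for `d ∈ [6]` (here zero-indexed, `d ∈ {0,…,5}`)
    (hslt : ∀ j : Fin m, ∀ d : ℕ, d < 6 → s j d < r n idx j)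
    -- `s_{j,d} ≡ 1 (mod q_j)` for all `d ∈ [6]`
    (hsq : ∀ j : Fin m, ∀ d : ℕ, d < 6 → s j d % q n j = 1)
    -- for `a ∈ [3]`: `s_{j,a} ≡ -1 (mod p_{i_a})` and `s_{j,a} ≡ 0 (mod p_{i_b})` for `b ≠ a`
    (hs1 : ∀ j : Fin m, ∀ a b : Fin 3,
      (s j a.val + if a = b then 1 else 0) % p (idx j b) = 0)
    -- `(s_{j,4}, s_{j,5}, s_{j,6}) ≡ (-1,-3,-2) (mod p_{i_1})`, `(-2,-1,-3) (mod p_{i_2})`,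
    -- `(-3,-2,-1) (mod p_{i_3})`
    (hs2 : ∀ j : Fin m, ∀ c b : Fin 3,
      (s j (3 + c.val) + (1 + (3 + b.val - c.val) % 3)) % p (idx j b) = 0)
    -- `t_j ∈ [0, r_j - 1]`, `t_j ≡ 1 (mod p_{i_a})` for `a ∈ [3]`, `t_j ≡ 0 (mod q_j)`
    (htlt : ∀ j : Fin m, t j < r n idx j)
    (htp : ∀ j : Fin m, ∀ a : Fin 3, t j % p (idx j a) = 1)
    (htq : ∀ j : Fin m, t j % q n j = 0) :
    (∃ x1 x2 : ℕ,
        (pi1 n idx s ^ x1 * pi2 n idx t ^ x2).cycleType = (rho n idx).cycleType) ↔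
      ∃ T : Finset (Fin n),
        ∀ j : Fin m, (T ∩ {idx j 0, idx j 1, idx j 2}).card = 1 :=
  cycleType_eq_iff_exactHittingSet_general (fun j => (hidx j).injective) hsq hs1 hs2 htp htq

end HittingSet
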